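/- arXiv:1910.08460 — 2 statements merged into one kernel-verified Lean document; each statement's English description precedes it below -/
import Mathlib

section
/- Suppose δ'_j < 1/4. Then ‖P̂_j − P_j‖_2 ≤ 4δ'_j / (1 − 4δ'_j). In particular δ'_j < 1/8 implies ‖P̂_j − P_j‖_2 ≤ 8 δ'_j. -/
open Matrix Finset

noncomputable def opNorm {d : ℕ} (A : Matrix (Fin d) (Fin d) ℝ) : ℝ :=
  ‖Matrix.toEuclideanCLM (𝕜 := ℝ) A‖

noncomputable def hsNorm {d : ℕ} (A : Matrix (Fin d) (Fin d) ℝ) : ℝ :=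
  Real.sqrt (Matrix.trace (Aᵀ * A))

noncomputable def proj {d : ℕ} (u : Fin d → ℝ) : Matrix (Fin d) (Fin d) ℝ :=
  Matrix.vecMulVec u u

/-- `|R_j|^{1/2}` : square root of the absolute value of the reduced resolvent. -/
noncomputable def sqrtAbsRes {d : ℕ} (lam : Fin d → ℝ) (u : Fin d → Fin d → ℝ)
    (j : Fin d) : Matrix (Fin d) (Fin d) ℝ :=
  ∑ k ∈ Finset.univ.filter (fun k => k ≠ j), (Real.sqrt |lam k - lam j|)⁻¹ • proj (u k)

/-- `|R_j|^{-1/2}`. -/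
noncomputable def invSqrtAbsRes {d : ℕ} (lam : Fin d → ℝ) (u : Fin d → Fin d → ℝ)
    (j : Fin d) : Matrix (Fin d) (Fin d) ℝ :=
  ∑ k ∈ Finset.univ.filter (fun k => k ≠ j), Real.sqrt |lam k - lam j| • proj (u k)

/-- the reduced resolvent `R_j`. -/
noncomputable def res {d : ℕ} (lam : Fin d → ℝ) (u : Fin d → Fin d → ℝ)
    (j : Fin d) : Matrix (Fin d) (Fin d) ℝ :=
  ∑ k ∈ Finset.univ.filter (fun k => k ≠ j), (lam k - lam j)⁻¹ • proj (u k)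

/-- `δ_j`. -/
noncomputable def delta {d : ℕ} (lam : Fin d → ℝ) (u : Fin d → Fin d → ℝ) (j : Fin d)
    (gj : ℝ) (E : Matrix (Fin d) (Fin d) ℝ) : ℝ :=
  opNorm ((sqrtAbsRes lam u j + (Real.sqrt gj)⁻¹ • proj (u j)) * E *
    (sqrtAbsRes lam u j + (Real.sqrt gj)⁻¹ • proj (u j)))

/-- `δ'_j`. -/
noncomputable def delta' {d : ℕ} (lam : Fin d → ℝ) (u : Fin d → Fin d → ℝ) (j : Fin d)
    (gj : ℝ) (E : Matrix (Fin d) (Fin d) ℝ) : ℝ :=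
  max (opNorm (sqrtAbsRes lam u j * E * sqrtAbsRes lam u j))
    (max ((Real.sqrt gj)⁻¹ * hsNorm (sqrtAbsRes lam u j * E * proj (u j)))
      (gj⁻¹ * hsNorm (proj (u j) * E * proj (u j))))

/-!
Write `δ_j = ‖W^{-1/2} E W^{-1/2}‖` with `W = |R_j|⁻¹ + g_j P_j`. Splitting along `P_j` and
`1 - P_j` turns `W^{-1/2} E W^{-1/2}` into a `2 × 2` block operator whose blocks are bounded by
`δ'_j`, so `δ_j ≤ 2 δ'_j`. The form bound `±E ≤ δ_j W` and a Courant–Fischer dimension count give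
`|λ̂_j - λ_j| ≤ δ_j g_j` as soon as `δ_j ≤ 1`, because then `x ↦ x ± δ_j |x - λ_j|` is monotone.
Reading `E û_j = (λ̂_j - Σ) û_j` in the eigenbasis of `Σ` weighted by `W^{-1/2}` bounds the sine of
the angle between `u_j` and `û_j` by `δ_j / (1 - δ_j)` if `δ_j ≤ 1/2`, and the Hilbert–Schmidt
distance of the two projections is `√2` times that sine.
-/

open InnerProductSpace

variable {𝕜 V ι : Type*} [RCLike 𝕜] [NormedAddCommGroup V] [InnerProductSpace 𝕜 V]

section BlockBound

variable [CompleteSpace V] {P F : V →L[𝕜] V}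

lemma norm_sq_eq_add_of_isStarProjection (hP : IsStarProjection P) (x : V) :
    ‖x‖ ^ 2 = ‖P x‖ ^ 2 + ‖(1 - P) x‖ ^ 2 := by
  obtain ⟨K, _, rfl⟩ := isStarProjection_iff_eq_starProjection.mp hP
  rw [K.norm_sq_eq_add_norm_sq_starProjection x, K.starProjection_orthogonal]
  rfl

lemma norm_le_two_mul_of_blocks (hP : IsStarProjection P) (hF : IsSelfAdjoint F) {c : ℝ}
    (h₁₁ : ‖P * F * P‖ ≤ c) (h₂₁ : ‖(1 - P) * F * P‖ ≤ c)
    (h₂₂ : ‖(1 - P) * F * (1 - P)‖ ≤ c) : ‖F‖ ≤ 2 * c := by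
  have hc : 0 ≤ c := (norm_nonneg _).trans h₁₁
  have h₁₂ : ‖P * F * (1 - P)‖ ≤ c := by
    rwa [← norm_star, star_mul, star_mul, hF.star_eq, hP.isSelfAdjoint.star_eq,
      hP.one_sub.isSelfAdjoint.star_eq, ← mul_assoc]
  refine F.opNorm_le_bound (by positivity) fun x => ?_
  have hrow : ∀ R : V →L[𝕜] V, ‖R * F * P‖ ≤ c → ‖R * F * (1 - P)‖ ≤ c →
      ‖R (F x)‖ ≤ c * (‖P x‖ + ‖(1 - P) x‖) := fun R h₁ h₂ => by
    have hsplit : R (F x) = (R * F * P) (P x) + (R * F * (1 - P)) ((1 - P) x) := by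
      simp only [← mul_apply_eq_comp, mul_assoc, hP.isIdempotentElem.eq,
        hP.one_sub.isIdempotentElem.eq, ← _root_.add_apply, ← mul_add,
        add_sub_cancel, mul_one]
    rw [hsplit, mul_add]
    exact norm_add_le_of_le (ContinuousLinearMap.le_of_opNorm_le _ h₁ _)
      (ContinuousLinearMap.le_of_opNorm_le _ h₂ _)
  refine le_of_sq_le_sq ?_ (by positivity)
  calc ‖F x‖ ^ 2 = ‖P (F x)‖ ^ 2 + ‖(1 - P) (F x)‖ ^ 2 := norm_sq_eq_add_of_isStarProjection hP _
    _ ≤ (c * (‖P x‖ + ‖(1 - P) x‖)) ^ 2 + (c * (‖P x‖ + ‖(1 - P) x‖)) ^ 2 := by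
      gcongr
      · exact hrow P h₁₁ h₁₂
      · exact hrow (1 - P) h₂₁ h₂₂
    _ = 2 * c ^ 2 * (‖P x‖ + ‖(1 - P) x‖) ^ 2 := by ring
    _ ≤ 2 * c ^ 2 * (2 * (‖P x‖ ^ 2 + ‖(1 - P) x‖ ^ 2)) := by
      gcongr
      exact add_sq_le
    _ = (2 * c * ‖x‖) ^ 2 := by rw [← norm_sq_eq_add_of_isStarProjection hP]; ring

end BlockBound

section HilbertSchmidt

variable [Fintype ι]

/-- The Hilbert–Schmidt norm, computed in an orthonormal basis `b`. -/
noncomputable def hilbertSchmidtNorm (b : OrthonormalBasis ι 𝕜 V) (A : V →L[𝕜] V) : ℝ :=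
  √(∑ k, ‖A (b k)‖ ^ 2)

variable (b : OrthonormalBasis ι 𝕜 V)

lemma hilbertSchmidtNorm_rankOne (x y : V) :
    hilbertSchmidtNorm b (rankOne 𝕜 x y) = ‖rankOne 𝕜 x y‖ := by
  simp only [hilbertSchmidtNorm, rankOne_apply, norm_smul, mul_pow, ← Finset.sum_mul,
    b.sum_sq_norm_inner_left]
  rw [← mul_pow, Real.sqrt_sq (by positivity), norm_rankOne, mul_comm]

lemma hilbertSchmidtNorm_rankOne_sub_rankOne_sq {x y : V} (hx : ‖x‖ = 1) (hy : ‖y‖ = 1) :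
    hilbertSchmidtNorm b (rankOne 𝕜 x x - rankOne 𝕜 y y) ^ 2 = 2 * (1 - ‖⟪y, x⟫_𝕜‖ ^ 2) := by
  have hcross : ∑ k, RCLike.re ⟪⟪x, b k⟫_𝕜 • x, ⟪y, b k⟫_𝕜 • y⟫_𝕜 = ‖⟪y, x⟫_𝕜‖ ^ 2 := by
    simp only [inner_smul_left, inner_smul_right, inner_conj_symm]
    rw [← map_sum]
    simp only [← mul_assoc, ← Finset.sum_mul, b.sum_inner_mul_inner]
    rw [← inner_conj_symm x y, RCLike.mul_conj, ← RCLike.ofReal_pow, RCLike.ofReal_re]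
  rw [hilbertSchmidtNorm, Real.sq_sqrt (by positivity)]
  simp only [_root_.sub_apply, rankOne_apply, norm_sub_sq (𝕜 := 𝕜), norm_smul, hx, hy,
    mul_one, Finset.sum_add_distrib, Finset.sum_sub_distrib, ← Finset.mul_sum, hcross,
    b.sum_sq_norm_inner_left]
  ring

lemma hilbertSchmidtNorm_mul_rankOne (A : V →L[𝕜] V) (x y : V) :
    hilbertSchmidtNorm b (A * rankOne 𝕜 x y) = ‖A * rankOne 𝕜 x y‖ := by
  rw [ContinuousLinearMap.mul_def, comp_rankOne, hilbertSchmidtNorm_rankOne]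

end HilbertSchmidt

section DiagOp

variable [Fintype ι]

/-- The operator with orthonormal eigenbasis `b` and real eigenvalues `c`. -/
noncomputable def diagOp (b : OrthonormalBasis ι 𝕜 V) (c : ι → ℝ) : V →L[𝕜] V :=
  ∑ k, (c k : 𝕜) • rankOne 𝕜 (b k) (b k)

variable (b : OrthonormalBasis ι 𝕜 V) (c : ι → ℝ)

lemma diagOp_apply_basis (k : ι) : diagOp b c (b k) = (c k : 𝕜) • b k := by
  classical
  simp [diagOp, b.inner_eq_ite]

lemma isSymmetric_diagOp : (diagOp b c : V →ₗ[𝕜] V).IsSymmetric := fun x y => by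
  simp [diagOp, sum_inner, inner_sum, inner_smul_left,
    inner_smul_right, mul_assoc, mul_comm]

lemma inner_diagOp_apply_left (x y : V) : ⟪diagOp b c x, y⟫_𝕜 = ⟪x, diagOp b c y⟫_𝕜 :=
  isSymmetric_diagOp b c x y

lemma inner_basis_diagOp_apply (k : ι) (x : V) :
    ⟪b k, diagOp b c x⟫_𝕜 = c k * ⟪b k, x⟫_𝕜 := by
  rw [← inner_diagOp_apply_left, diagOp_apply_basis, inner_smul_left, RCLike.conj_ofReal]

lemma norm_diagOp_apply_sq (x : V) :
    ‖diagOp b c x‖ ^ 2 = ∑ k, c k ^ 2 * ‖⟪b k, x⟫_𝕜‖ ^ 2 := by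
  rw [← b.sum_sq_norm_inner_right]
  simp [inner_basis_diagOp_apply, mul_pow]

lemma re_inner_diagOp_apply_self (x : V) :
    RCLike.re ⟪x, diagOp b c x⟫_𝕜 = ∑ k, c k * ‖⟪b k, x⟫_𝕜‖ ^ 2 := by
  rw [← b.sum_inner_mul_inner, map_sum]
  refine Finset.sum_congr rfl fun k _ => ?_
  rw [inner_basis_diagOp_apply, mul_left_comm, RCLike.re_ofReal_mul, ← inner_conj_symm,
    RCLike.conj_mul, ← RCLike.ofReal_pow, RCLike.ofReal_re]

lemma diagOp_mul_diagOp (c' : ι → ℝ) : diagOp b c * diagOp b c' = diagOp b (c * c') := by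
  refine ContinuousLinearMap.coe_injective (b.toBasis.ext fun k => ?_)
  simp [diagOp_apply_basis, smul_smul, mul_comm]

lemma diagOp_one : diagOp b 1 = 1 := by
  refine ContinuousLinearMap.coe_injective (b.toBasis.ext fun k => ?_)
  simp [diagOp_apply_basis]

lemma diagOp_mul_rankOne (j : ι) (x : V) :
    diagOp b c * rankOne 𝕜 (b j) x = (c j : 𝕜) • rankOne 𝕜 (b j) x := by
  ext y
  simp [diagOp_apply_basis, smul_comm (c j : 𝕜)]

lemma rankOne_mul_diagOp (x : V) (j : ι) :
    rankOne 𝕜 x (b j) * diagOp b c = (c j : 𝕜) • rankOne 𝕜 x (b j) := by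
  ext y
  simp [inner_basis_diagOp_apply, smul_smul]

lemma diagOp_sub_smul_rankOne [DecidableEq ι] (j : ι) :
    diagOp b c - (c j : 𝕜) • rankOne 𝕜 (b j) (b j) = diagOp b (Function.update c j 0) := by
  refine ContinuousLinearMap.coe_injective (b.toBasis.ext fun k => ?_)
  rcases eq_or_ne k j with rfl | hk
  · simp [diagOp_apply_basis]
  · simp [diagOp_apply_basis, hk, b.inner_eq_zero hk.symm]

end DiagOp

section RelNorm

variable [Fintype ι]

/-- The size of `E` relative to the weights `w`, that is `‖W^{-1/2} E W^{-1/2}‖` for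
`W = diagOp b w`. For the weights `gapWeight lam j g` this is the relative perturbation `δ_j`. -/
noncomputable def relNorm (b : OrthonormalBasis ι 𝕜 V) (w : ι → ℝ) (E : V →L[𝕜] V) : ℝ :=
  ‖diagOp b (fun k => (√(w k))⁻¹) * E * diagOp b (fun k => (√(w k))⁻¹)‖

variable (b : OrthonormalBasis ι 𝕜 V) {w : ι → ℝ}

lemma diagOp_inv_sqrt_apply_diagOp_sqrt (hw : ∀ k, 0 < w k) (x : V) :
    diagOp b (fun k => (√(w k))⁻¹) (diagOp b (fun k => √(w k)) x) = x := by
  have hone : (fun k => (√(w k))⁻¹) * (fun k => √(w k)) = 1 :=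
    funext fun k => inv_mul_cancel₀ (Real.sqrt_pos.mpr (hw k)).ne'
  rw [← mul_apply_eq_comp, diagOp_mul_diagOp, hone, diagOp_one, one_apply_eq_self]

lemma norm_diagOp_sqrt_apply_sq (hw : ∀ k, 0 < w k) (x : V) :
    ‖diagOp b (fun k => √(w k)) x‖ ^ 2 = ∑ k, w k * ‖⟪b k, x⟫_𝕜‖ ^ 2 := by
  simp only [norm_diagOp_apply_sq, Real.sq_sqrt (hw _).le]

lemma norm_diagOp_inv_sqrt_apply_le (hw : ∀ k, 0 < w k) (E : V →L[𝕜] V) (x : V) :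
    ‖diagOp b (fun k => (√(w k))⁻¹) (E x)‖ ≤ relNorm b w E * ‖diagOp b (fun k => √(w k)) x‖ := by
  conv_lhs => rw [← diagOp_inv_sqrt_apply_diagOp_sqrt b hw x]
  exact ContinuousLinearMap.le_opNorm (_ * E * _) _

lemma abs_re_inner_apply_self_le (hw : ∀ k, 0 < w k) (E : V →L[𝕜] V) (x : V) :
    |RCLike.re ⟪x, E x⟫_𝕜| ≤ relNorm b w E * ∑ k, w k * ‖⟪b k, x⟫_𝕜‖ ^ 2 := by
  have hmove : ⟪x, E x⟫_𝕜 =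
      ⟪diagOp b (fun k => √(w k)) x, diagOp b (fun k => (√(w k))⁻¹) (E x)⟫_𝕜 := by
    rw [← inner_diagOp_apply_left, diagOp_inv_sqrt_apply_diagOp_sqrt b hw]
  calc |RCLike.re ⟪x, E x⟫_𝕜|
      ≤ ‖diagOp b (fun k => √(w k)) x‖ * ‖diagOp b (fun k => (√(w k))⁻¹) (E x)‖ := by
        rw [hmove]
        exact (RCLike.abs_re_le_norm _).trans (norm_inner_le_norm _ _)
    _ ≤ ‖diagOp b (fun k => √(w k)) x‖ * (relNorm b w E * ‖diagOp b (fun k => √(w k)) x‖) := by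
        gcongr
        exact norm_diagOp_inv_sqrt_apply_le b hw E x
    _ = relNorm b w E * ∑ k, w k * ‖⟪b k, x⟫_𝕜‖ ^ 2 := by
        rw [← norm_diagOp_sqrt_apply_sq b hw]; ring

lemma sum_inv_mul_norm_inner_apply_sq_le (hw : ∀ k, 0 < w k) (E : V →L[𝕜] V) (x : V) :
    ∑ k, (w k)⁻¹ * ‖⟪b k, E x⟫_𝕜‖ ^ 2 ≤ relNorm b w E ^ 2 * ∑ k, w k * ‖⟪b k, x⟫_𝕜‖ ^ 2 := by
  have h := pow_le_pow_left₀ (norm_nonneg _) (norm_diagOp_inv_sqrt_apply_le b hw E x) 2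
  simpa only [mul_pow, norm_diagOp_sqrt_apply_sq b hw, norm_diagOp_apply_sq, inv_pow,
    Real.sq_sqrt (hw _).le] using h

end RelNorm

section Eigenvalues

lemma exists_ne_zero_forall_inner_eq_zero {κ : Type*} [Fintype κ] (v : κ → V)
    (hcard : Fintype.card κ < Module.finrank 𝕜 V) : ∃ x : V, x ≠ 0 ∧ ∀ k, ⟪v k, x⟫_𝕜 = 0 := by
  have := FiniteDimensional.of_finrank_pos (Nat.zero_lt_of_lt hcard)
  have hspan : Submodule.span 𝕜 (Set.range v) ≠ ⊤ := fun htop => by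
    have := finrank_range_le_card (R := 𝕜) v
    rw [Set.finrank, htop, finrank_top] at this
    omega
  obtain ⟨x, hx, hx0⟩ := Submodule.exists_mem_ne_zero_of_ne_bot
    (mt (Submodule.orthogonal_eq_bot_iff).mp hspan)
  exact ⟨x, hx0, fun k => hx (v k) (Submodule.subset_span ⟨k, rfl⟩)⟩

variable [Fintype ι] [LinearOrder ι]

lemma le_of_sum_mul_sq_inner_le (b b' : OrthonormalBasis ι 𝕜 V) {c c' : ι → ℝ} {m M : ℝ} (j : ι)
    (hform : ∀ x, ∑ k, c k * ‖⟪b k, x⟫_𝕜‖ ^ 2 ≤ ∑ k, c' k * ‖⟪b' k, x⟫_𝕜‖ ^ 2)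
    (hc : ∀ k ≤ j, m ≤ c k) (hc' : ∀ k ≥ j, c' k ≤ M) : m ≤ M := by
  have hcard : Fintype.card {k // k ≠ j} < Module.finrank 𝕜 V := by
    rw [Module.finrank_eq_card_basis b.toBasis]
    exact Fintype.card_subtype_lt (x := j) (by simp)
  obtain ⟨x, hx, hx0⟩ := exists_ne_zero_forall_inner_eq_zero
    (fun k : {k // k ≠ j} => if k.1 < j then b' k else b k) hcard
  have hb : ∀ k, j < k → ⟪b k, x⟫_𝕜 = 0 := fun k hk => by
    simpa [hk.not_gt] using hx0 ⟨k, hk.ne'⟩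
  have hb' : ∀ k, k < j → ⟪b' k, x⟫_𝕜 = 0 := fun k hk => by
    simpa [hk] using hx0 ⟨k, hk.ne⟩
  refine le_of_mul_le_mul_right ?_ (pow_pos (norm_pos_iff.mpr hx) 2)
  calc m * ‖x‖ ^ 2 = ∑ k, m * ‖⟪b k, x⟫_𝕜‖ ^ 2 := by
        rw [← Finset.mul_sum, b.sum_sq_norm_inner_right]
    _ ≤ ∑ k, c k * ‖⟪b k, x⟫_𝕜‖ ^ 2 := by
        refine Finset.sum_le_sum fun k _ => ?_
        rcases le_or_gt k j with hk | hk
        · gcongr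
          exact hc k hk
        · simp [hb k hk]
    _ ≤ ∑ k, c' k * ‖⟪b' k, x⟫_𝕜‖ ^ 2 := hform x
    _ ≤ ∑ k, M * ‖⟪b' k, x⟫_𝕜‖ ^ 2 := by
        refine Finset.sum_le_sum fun k _ => ?_
        rcases lt_or_ge k j with hk | hk
        · simp [hb' k hk]
        · gcongr
          exact hc' k hk
    _ = M * ‖x‖ ^ 2 := by rw [← Finset.mul_sum, b'.sum_sq_norm_inner_right]

end Eigenvalues

section GapWeight

/-- The eigenvalues of `|R_j|⁻¹ + g P_j`, where `R_j` is the reduced resolvent at `lam j`. -/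
def gapWeight [DecidableEq ι] (lam : ι → ℝ) (j : ι) (g : ℝ) (k : ι) : ℝ :=
  if k = j then g else |lam k - lam j|

lemma gapWeight_self [DecidableEq ι] (lam : ι → ℝ) (j : ι) (g : ℝ) : gapWeight lam j g j = g :=
  if_pos rfl

lemma gapWeight_of_ne [DecidableEq ι] (lam : ι → ℝ) {j k : ι} (g : ℝ) (hk : k ≠ j) :
    gapWeight lam j g k = |lam k - lam j| :=
  if_neg hk

lemma gapWeight_pos [DecidableEq ι] {lam : ι → ℝ} {j : ι} {g : ℝ} (hg : 0 < g)
    (hgap : ∀ k, k ≠ j → g ≤ |lam k - lam j|) (k : ι) : 0 < gapWeight lam j g k := by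
  unfold gapWeight
  split_ifs with hk
  · exact hg
  · exact hg.trans_le (hgap k hk)

lemma sub_mul_le_sub_mul_gapWeight [LinearOrder ι] {lam : ι → ℝ} (hlam : Antitone lam) {j k : ι}
    {g ε : ℝ} (hg : 0 ≤ g) (hε : 0 ≤ ε) (hε' : ε ≤ 1) (hk : k ≤ j) :
    lam j - ε * g ≤ lam k - ε * gapWeight lam j g k := by
  rcases hk.eq_or_lt with rfl | hk
  · rw [gapWeight_self]
  · rw [gapWeight_of_ne _ _ hk.ne, abs_of_nonneg (sub_nonneg.mpr (hlam hk.le))]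
    nlinarith [hlam hk.le, mul_nonneg hε hg]

lemma add_mul_gapWeight_le_add_mul [LinearOrder ι] {lam : ι → ℝ} (hlam : Antitone lam) {j k : ι}
    {g ε : ℝ} (hg : 0 ≤ g) (hε : 0 ≤ ε) (hε' : ε ≤ 1) (hk : j ≤ k) :
    lam k + ε * gapWeight lam j g k ≤ lam j + ε * g := by
  rcases hk.eq_or_lt with rfl | hk
  · rw [gapWeight_self]
  · rw [gapWeight_of_ne _ _ hk.ne', abs_of_nonpos (sub_nonpos.mpr (hlam hk.le))]
    nlinarith [hlam hk.le, mul_nonneg hε hg]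

variable [Fintype ι]

theorem abs_eigenvalue_sub_le [LinearOrder ι] {b bh : OrthonormalBasis ι 𝕜 V} {lam lamh : ι → ℝ}
    {j : ι} {g : ℝ} {E : V →L[𝕜] V} (hlam : Antitone lam) (hlamh : Antitone lamh) (hg : 0 < g)
    (hgap : ∀ k, k ≠ j → g ≤ |lam k - lam j|) (hdecomp : diagOp b lam + E = diagOp bh lamh)
    (hsmall : relNorm b (gapWeight lam j g) E ≤ 1) :
    |lamh j - lam j| ≤ relNorm b (gapWeight lam j g) E * g := by
  have hform := abs_re_inner_apply_self_le b (gapWeight_pos hg hgap) E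
  have hε : 0 ≤ relNorm b (gapWeight lam j g) E := norm_nonneg _
  set ε := relNorm b (gapWeight lam j g) E
  have hquad : ∀ x, ∑ k, lamh k * ‖⟪bh k, x⟫_𝕜‖ ^ 2 =
      ∑ k, lam k * ‖⟪b k, x⟫_𝕜‖ ^ 2 + RCLike.re ⟪x, E x⟫_𝕜 := fun x => by
    rw [← re_inner_diagOp_apply_self, ← hdecomp, _root_.add_apply, inner_add_right, map_add,
      re_inner_diagOp_apply_self]
  have hlower : lam j - ε * g ≤ lamh j := by
    refine le_of_sum_mul_sq_inner_le b bh j (fun x => ?_)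
      (fun k => sub_mul_le_sub_mul_gapWeight hlam hg.le hε hsmall) fun k hk => hlamh hk
    simp only [sub_mul, Finset.sum_sub_distrib, mul_assoc, ← Finset.mul_sum]
    linarith [hquad x, (abs_le.mp (hform x)).1]
  have hupper : lamh j ≤ lam j + ε * g := by
    refine le_of_sum_mul_sq_inner_le bh b j (fun x => ?_) (fun k hk => hlamh hk)
      fun k => add_mul_gapWeight_le_add_mul hlam hg.le hε hsmall
    simp only [add_mul, Finset.sum_add_distrib, mul_assoc, ← Finset.mul_sum]
    linarith [hquad x, (abs_le.mp (hform x)).2]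
  exact abs_le.mpr ⟨by linarith, by linarith⟩

end GapWeight

section Eigenvector

lemma one_sub_mul_gapWeight_le [DecidableEq ι] {lam : ι → ℝ} {j k : ι} {g μ ε : ℝ} (hε : 0 ≤ ε)
    (hμ : |μ - lam j| ≤ ε * g) (hk : k ≠ j) (hgap : g ≤ |lam k - lam j|) :
    (1 - ε) * gapWeight lam j g k ≤ |μ - lam k| := by
  have htri := abs_sub_le (lam k) μ (lam j)
  rw [abs_sub_comm (lam k) μ] at htri
  rw [gapWeight_of_ne _ _ hk]
  nlinarith

variable [Fintype ι] {b : OrthonormalBasis ι 𝕜 V} {lam : ι → ℝ} {j : ι} {g μ : ℝ} {E : V →L[𝕜] V}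
  {v : V}

lemma mul_one_sub_norm_inner_sq_le [DecidableEq ι] {w : ι → ℝ} (hw : ∀ k, k ≠ j → g ≤ w k)
    (hv : ‖v‖ = 1) :
    g * (1 - ‖⟪b j, v⟫_𝕜‖ ^ 2) ≤ ∑ k ∈ univ.erase j, w k * ‖⟪b k, v⟫_𝕜‖ ^ 2 := by
  have hone := b.sum_sq_norm_inner_right v
  rw [hv, one_pow, ← Finset.add_sum_erase _ _ (mem_univ j)] at hone
  rw [← hone, add_sub_cancel_left, Finset.mul_sum]
  refine Finset.sum_le_sum fun k hk => ?_
  gcongr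
  exact hw k (ne_of_mem_erase hk)

lemma inner_basis_perturbation_apply_eigenvector (hv : (diagOp b lam + E) v = (μ : 𝕜) • v) (k : ι) :
    ⟪b k, E v⟫_𝕜 = ((μ - lam k : ℝ) : 𝕜) * ⟪b k, v⟫_𝕜 := by
  have hres : E v = (μ : 𝕜) • v - diagOp b lam v := by
    rw [← hv, _root_.add_apply, add_sub_cancel_left]
  rw [hres, inner_sub_right, inner_smul_right, inner_basis_diagOp_apply, RCLike.ofReal_sub, sub_mul]

lemma one_sub_sq_mul_sum_erase_le [DecidableEq ι] {w : ι → ℝ} {ε : ℝ} (hw : ∀ k, 0 < w k)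
    (hv : (diagOp b lam + E) v = (μ : 𝕜) • v) (hε : ε ≤ 1)
    (hsep : ∀ k, k ≠ j → (1 - ε) * w k ≤ |μ - lam k|) :
    (1 - ε) ^ 2 * ∑ k ∈ univ.erase j, w k * ‖⟪b k, v⟫_𝕜‖ ^ 2 ≤
      relNorm b w E ^ 2 * ∑ k, w k * ‖⟪b k, v⟫_𝕜‖ ^ 2 :=
  calc (1 - ε) ^ 2 * ∑ k ∈ univ.erase j, w k * ‖⟪b k, v⟫_𝕜‖ ^ 2
      = ∑ k ∈ univ.erase j, (w k)⁻¹ * ((1 - ε) * w k * ‖⟪b k, v⟫_𝕜‖) ^ 2 := by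
        rw [Finset.mul_sum]
        refine Finset.sum_congr rfl fun k _ => ?_
        field_simp [(hw k).ne']
    _ ≤ ∑ k ∈ univ.erase j, (w k)⁻¹ * ‖⟪b k, E v⟫_𝕜‖ ^ 2 := by
        refine Finset.sum_le_sum fun k hk => ?_
        have := hw k
        have := sub_nonneg.mpr hε
        rw [inner_basis_perturbation_apply_eigenvector hv, norm_mul, RCLike.norm_ofReal]
        gcongr
        exact hsep k (ne_of_mem_erase hk)
    _ ≤ ∑ k, (w k)⁻¹ * ‖⟪b k, E v⟫_𝕜‖ ^ 2 :=
        Finset.sum_le_univ_sum_of_nonneg fun k => by have := hw k; positivity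
    _ ≤ relNorm b w E ^ 2 * ∑ k, w k * ‖⟪b k, v⟫_𝕜‖ ^ 2 :=
        sum_inv_mul_norm_inner_apply_sq_le b hw E v

theorem one_sub_sq_mul_one_sub_norm_inner_sq_le [DecidableEq ι] (hg : 0 < g)
    (hgap : ∀ k, k ≠ j → g ≤ |lam k - lam j|) (hsmall : relNorm b (gapWeight lam j g) E ≤ 1 / 2)
    (hv : (diagOp b lam + E) v = (μ : 𝕜) • v) (hnorm : ‖v‖ = 1)
    (hμ : |μ - lam j| ≤ relNorm b (gapWeight lam j g) E * g) :
    (1 - relNorm b (gapWeight lam j g) E) ^ 2 * (1 - ‖⟪b j, v⟫_𝕜‖ ^ 2) ≤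
      relNorm b (gapWeight lam j g) E ^ 2 := by
  have hε : 0 ≤ relNorm b (gapWeight lam j g) E := norm_nonneg _
  have hresidual := one_sub_sq_mul_sum_erase_le (gapWeight_pos hg hgap) hv (by linarith)
    fun k hk => one_sub_mul_gapWeight_le hε hμ hk (hgap k hk)
  have hleak := mul_one_sub_norm_inner_sq_le (b := b) (w := gapWeight lam j g)
    (fun k hk => (hgap k hk).trans_eq (gapWeight_of_ne _ _ hk).symm) hnorm
  rw [← Finset.add_sum_erase _ _ (mem_univ j), gapWeight_self] at hresidual
  set ε := relNorm b (gapWeight lam j g) E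
  set offDiag := ∑ k ∈ univ.erase j, gapWeight lam j g k * ‖⟪b k, v⟫_𝕜‖ ^ 2
  have hscaled : (1 - 2 * ε) * (g * (1 - ‖⟪b j, v⟫_𝕜‖ ^ 2)) ≤ ε ^ 2 * (g * ‖⟪b j, v⟫_𝕜‖ ^ 2) :=
    (mul_le_mul_of_nonneg_left hleak (by linarith)).trans (by linarith)
  exact le_of_mul_le_mul_left (by linarith) hg

end Eigenvector

section SpectralProjection

variable [Fintype ι] [LinearOrder ι] {b bh : OrthonormalBasis ι 𝕜 V} {lam lamh : ι → ℝ}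
  {j : ι} {g : ℝ} {E : V →L[𝕜] V}

theorem hilbertSchmidtNorm_rankOne_sub_rankOne_le (hlam : Antitone lam) (hlamh : Antitone lamh)
    (hg : 0 < g) (hgap : ∀ k, k ≠ j → g ≤ |lam k - lam j|)
    (hdecomp : diagOp b lam + E = diagOp bh lamh)
    (hsmall : relNorm b (gapWeight lam j g) E ≤ 1 / 2) :
    hilbertSchmidtNorm b (rankOne 𝕜 (bh j) (bh j) - rankOne 𝕜 (b j) (b j)) ≤
      √2 * relNorm b (gapWeight lam j g) E / (1 - relNorm b (gapWeight lam j g) E) := by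
  have hε : 0 ≤ relNorm b (gapWeight lam j g) E := norm_nonneg _
  have hμ := abs_eigenvalue_sub_le hlam hlamh hg hgap hdecomp (hsmall.trans (by norm_num))
  have hsin := one_sub_sq_mul_one_sub_norm_inner_sq_le hg hgap hsmall
    (by rw [hdecomp, diagOp_apply_basis]) (bh.norm_eq_one j) hμ
  rw [le_div_iff₀ (by linarith)]
  refine le_of_sq_le_sq ?_ (by positivity)
  rw [mul_pow, mul_pow, hilbertSchmidtNorm_rankOne_sub_rankOne_sq b (bh.norm_eq_one j)
    (b.norm_eq_one j), Real.sq_sqrt zero_le_two]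
  linarith

end SpectralProjection

section BlockRelNorm

variable [Fintype ι]

/-- The square root `|R_j|^{1/2}` of the absolute reduced resolvent of `diagOp b lam` at `lam j`.
Its `j`-th coefficient is `(√0)⁻¹ = 0`, so the summand `k = j` is dropped as it should be. -/
noncomputable def sqrtAbsResolvent (b : OrthonormalBasis ι 𝕜 V) (lam : ι → ℝ) (j : ι) :
    V →L[𝕜] V :=
  diagOp b fun k => (√|lam k - lam j|)⁻¹

/-- The blockwise relative perturbation `δ'_j` of `diagOp b lam` by `E`, for a gap `g`. -/
noncomputable def blockRelNorm (b : OrthonormalBasis ι 𝕜 V) (lam : ι → ℝ) (j : ι) (g : ℝ)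
    (E : V →L[𝕜] V) : ℝ :=
  max ‖sqrtAbsResolvent b lam j * E * sqrtAbsResolvent b lam j‖
    (max ((√g)⁻¹ * hilbertSchmidtNorm b (sqrtAbsResolvent b lam j * E * rankOne 𝕜 (b j) (b j)))
      (g⁻¹ * hilbertSchmidtNorm b (rankOne 𝕜 (b j) (b j) * E * rankOne 𝕜 (b j) (b j))))

variable (b : OrthonormalBasis ι 𝕜 V) (lam : ι → ℝ) (j : ι) {g : ℝ} {E : V →L[𝕜] V}

lemma diagOp_inv_sqrt_gapWeight_sub [DecidableEq ι] :
    diagOp b (fun k => (√(gapWeight lam j g k))⁻¹) - (((√g)⁻¹ : ℝ) : 𝕜) • rankOne 𝕜 (b j) (b j) =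
      sqrtAbsResolvent b lam j := by
  have hupdate : Function.update (fun k => (√(gapWeight lam j g k))⁻¹) j 0 =
      fun k => (√|lam k - lam j|)⁻¹ := by
    ext k
    rcases eq_or_ne k j with rfl | hk
    · simp
    · simp [hk, gapWeight_of_ne]
  have h := diagOp_sub_smul_rankOne b (fun k => (√(gapWeight lam j g k))⁻¹) j
  rwa [hupdate, gapWeight_self] at h

theorem relNorm_gapWeight_le [DecidableEq ι] (hE : (E : V →ₗ[𝕜] V).IsSymmetric) (hg : 0 < g) :
    relNorm b (gapWeight lam j g) E ≤ 2 * blockRelNorm b lam j g E := by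
  have := b.toBasis.finiteDimensional_of_finite
  have := FiniteDimensional.complete 𝕜 V
  have hS := (isSymmetric_diagOp b fun k => (√(gapWeight lam j g k))⁻¹).isSelfAdjoint
  have hSP := diagOp_mul_rankOne b (fun k => (√(gapWeight lam j g k))⁻¹) j (b j)
  have hPS := rankOne_mul_diagOp b (fun k => (√(gapWeight lam j g k))⁻¹) (b j) j
  have hT := diagOp_inv_sqrt_gapWeight_sub b lam j (g := g)
  rw [gapWeight_self] at hSP hPS
  simp only [relNorm, blockRelNorm, hilbertSchmidtNorm_mul_rankOne]
  set S := diagOp b fun k => (√(gapWeight lam j g k))⁻¹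
  set T := sqrtAbsResolvent b lam j
  set P := rankOne 𝕜 (b j) (b j)
  have hQS : (1 - P) * S = T := by rw [sub_mul, one_mul, hPS, hT]
  have hSQ : S * (1 - P) = T := by rw [mul_sub, mul_one, hSP, hT]
  have hassoc : ∀ A B : V →L[𝕜] V, A * (S * E * S) * B = A * S * E * (S * B) := fun A B => by
    simp only [mul_assoc]
  refine norm_le_two_mul_of_blocks (isStarProjection_rankOne_self (b.norm_eq_one j))
    (by simpa only [hS.star_eq] using hE.isSelfAdjoint.conjugate S) ?_ ?_ ?_
  · rw [hassoc, hPS, hSP, smul_mul_assoc, smul_mul_assoc, mul_smul_comm, smul_smul, norm_smul,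
      ← RCLike.ofReal_mul, ← mul_inv, Real.mul_self_sqrt hg.le,
      RCLike.norm_of_nonneg (by positivity)]
    exact le_max_of_le_right (le_max_right _ _)
  · rw [hassoc, hQS, hSP, mul_smul_comm, norm_smul, RCLike.norm_of_nonneg (by positivity)]
    exact le_max_of_le_right (le_max_left _ _)
  · rw [hassoc, hQS, hSQ]
    exact le_max_left _ _

end BlockRelNorm

theorem stmt11_general [Fintype ι] [LinearOrder ι] (b bh : OrthonormalBasis ι 𝕜 V)
    {lam lamh : ι → ℝ} (hlam : Antitone lam) (hlamh : Antitone lamh) {E : V →L[𝕜] V}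
    (hdecomp : diagOp b lam + E = diagOp bh lamh) {j : ι} {g : ℝ} (hg : 0 < g)
    (hgap : ∀ k, k ≠ j → g ≤ |lam k - lam j|) (hdelta : blockRelNorm b lam j g E < 1 / 4) :
    hilbertSchmidtNorm b (rankOne 𝕜 (bh j) (bh j) - rankOne 𝕜 (b j) (b j)) ≤
        4 * blockRelNorm b lam j g E / (1 - 4 * blockRelNorm b lam j g E) ∧
      (blockRelNorm b lam j g E < 1 / 8 →
        hilbertSchmidtNorm b (rankOne 𝕜 (bh j) (bh j) - rankOne 𝕜 (b j) (b j)) ≤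
          8 * blockRelNorm b lam j g E) := by
  have hE : (E : V →ₗ[𝕜] V).IsSymmetric := by
    rw [eq_sub_of_add_eq' hdecomp]
    exact (isSymmetric_diagOp bh lamh).sub (isSymmetric_diagOp b lam)
  have hε := relNorm_gapWeight_le b lam j hE hg
  have hbound := hilbertSchmidtNorm_rankOne_sub_rankOne_le hlam hlamh hg hgap hdecomp
    (by linarith)
  have hε₀ : 0 ≤ relNorm b (gapWeight lam j g) E := norm_nonneg _
  set ε := relNorm b (gapWeight lam j g) E
  set δ := blockRelNorm b lam j g E
  have hmain : hilbertSchmidtNorm b (rankOne 𝕜 (bh j) (bh j) - rankOne 𝕜 (b j) (b j)) ≤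
      4 * δ / (1 - 4 * δ) := by
    refine hbound.trans (div_le_div₀ (by linarith) ?_ (by linarith) (by linarith))
    calc √2 * ε ≤ 2 * (2 * δ) := by
          gcongr
          exact Real.sqrt_le_iff.mpr ⟨zero_le_two, by norm_num⟩
      _ = 4 * δ := by ring
  refine ⟨hmain, fun hδ => hmain.trans ?_⟩
  rw [div_le_iff₀ (by linarith)]
  nlinarith

section EuclideanSpace

variable {d : ℕ} {u : Fin d → Fin d → ℝ}
  (hON : ∀ k l, u k ⬝ᵥ u l = if k = l then (1 : ℝ) else 0)

/-- The orthonormal basis of `ℝ^d` formed by the vectors `u k`. -/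
noncomputable def euclideanBasis : OrthonormalBasis (Fin d) ℝ (EuclideanSpace ℝ (Fin d)) :=
  have horth : Orthonormal ℝ fun k => WithLp.toLp 2 (u k) :=
    orthonormal_iff_ite.mpr fun k l => by
      simp [EuclideanSpace.inner_toLp_toLp, dotProduct_comm (u l), hON]
  OrthonormalBasis.mk horth
    (horth.linearIndependent.span_eq_top_of_card_eq_finrank' (by simp)).ge

@[simp]
lemma euclideanBasis_apply (k : Fin d) : euclideanBasis hON k = WithLp.toLp 2 (u k) := by
  simp [euclideanBasis]

lemma toEuclideanCLM_proj (v : Fin d → ℝ) :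
    toEuclideanCLM (𝕜 := ℝ) (proj v) = rankOne ℝ (WithLp.toLp 2 v) (WithLp.toLp 2 v) := by
  ext x i
  simp [proj, ofLp_toEuclideanCLM, vecMulVec_mulVec, EuclideanSpace.inner_eq_star_dotProduct,
    mul_comm, dotProduct_comm]

lemma toEuclideanCLM_sum_smul_proj (c : Fin d → ℝ) :
    toEuclideanCLM (𝕜 := ℝ) (∑ k, c k • proj (u k)) = diagOp (euclideanBasis hON) c := by
  simp [diagOp, toEuclideanCLM_proj]

lemma toEuclideanCLM_sqrtAbsRes (lam : Fin d → ℝ) (j : Fin d) :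
    toEuclideanCLM (𝕜 := ℝ) (sqrtAbsRes lam u j) =
      sqrtAbsResolvent (euclideanBasis hON) lam j := by
  rw [sqrtAbsResolvent, ← toEuclideanCLM_sum_smul_proj, sqrtAbsRes, Finset.sum_filter_of_ne]
  rintro k - hk rfl
  simp at hk

lemma hsNorm_eq_hilbertSchmidtNorm (b : OrthonormalBasis (Fin d) ℝ (EuclideanSpace ℝ (Fin d)))
    (A : Matrix (Fin d) (Fin d) ℝ) :
    hsNorm A = hilbertSchmidtNorm b (toEuclideanCLM (𝕜 := ℝ) A) := by
  have htrace : (Aᵀ * A).trace = ∑ k, ⟪b k, toEuclideanCLM (𝕜 := ℝ) (Aᵀ * A) (b k)⟫_ℝ := by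
    rw [← trace_toLin_eq (Aᵀ * A) (EuclideanSpace.basisFun (Fin d) ℝ).toBasis,
      LinearMap.trace_eq_sum_inner _ b, ← toEuclideanLin_eq_toLin_orthonormal]
    rfl
  rw [hsNorm, htrace, hilbertSchmidtNorm]
  congr! 2 with k
  rw [← conjTranspose_eq_transpose_of_trivial, ← star_eq_conjTranspose, map_mul, map_star,
    mul_apply_eq_comp, ContinuousLinearMap.star_eq_adjoint, ContinuousLinearMap.adjoint_inner_right,
    real_inner_self_eq_norm_sq]

lemma delta'_eq_blockRelNorm (lam : Fin d → ℝ) (j : Fin d) (g : ℝ) (E : Matrix (Fin d) (Fin d) ℝ) :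
    delta' lam u j g E =
      blockRelNorm (euclideanBasis hON) lam j g (toEuclideanCLM (𝕜 := ℝ) E) := by
  simp only [delta', opNorm, blockRelNorm, hsNorm_eq_hilbertSchmidtNorm (euclideanBasis hON),
    map_mul, toEuclideanCLM_sqrtAbsRes hON, toEuclideanCLM_proj, euclideanBasis_apply]

end EuclideanSpace

theorem stmt11 {d : ℕ} (lam : Fin d → ℝ) (u : Fin d → Fin d → ℝ)
    (hON : ∀ k l, u k ⬝ᵥ u l = if k = l then (1 : ℝ) else 0)
    (hlam : Antitone lam)
    (E : Matrix (Fin d) (Fin d) ℝ) (hE : E.IsSymm)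
    (j : Fin d) (gj : ℝ) (hgj_pos : 0 < gj)
    (hgj : IsLeast {x : ℝ | ∃ k, k ≠ j ∧ x = |lam k - lam j|} gj)
    (lamh : Fin d → ℝ) (uh : Fin d → Fin d → ℝ)
    (hONh : ∀ k l, uh k ⬝ᵥ uh l = if k = l then (1 : ℝ) else 0)
    (hlamh : Antitone lamh)
    (hdecomp : (∑ k, lam k • proj (u k)) + E = ∑ k, lamh k • proj (uh k))
    (hdelta : delta' lam u j gj E < 1 / 4) :
    hsNorm (proj (uh j) - proj (u j)) ≤
        4 * delta' lam u j gj E / (1 - 4 * delta' lam u j gj E) ∧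
      (delta' lam u j gj E < 1 / 8 →
        hsNorm (proj (uh j) - proj (u j)) ≤ 8 * delta' lam u j gj E) := by
  rw [delta'_eq_blockRelNorm hON] at hdelta ⊢
  rw [hsNorm_eq_hilbertSchmidtNorm (euclideanBasis hON), map_sub, toEuclideanCLM_proj,
    toEuclideanCLM_proj, ← euclideanBasis_apply hON, ← euclideanBasis_apply hONh]
  refine stmt11_general _ _ hlam hlamh ?_ hgj_pos (fun k hk => hgj.2 ⟨k, hk, rfl⟩) hdelta
  rw [← toEuclideanCLM_sum_smul_proj, ← toEuclideanCLM_sum_smul_proj, ← map_add, hdecomp]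
end

section
/- Suppose δ'_j < 1/4. Then |λ̂_j − λ_j − tr(P_j E P_j)| ≤ 8 ‖P_j E |R_j|^{1/2}‖_2^2 / (1 − 4δ'_j) ≤ g_j (4δ'_j)^2 / (1 − 4δ'_j). -/
open Matrix Finset

/-!
Let `a = ⟨u_j, E u_j⟩` and `h = ‖P_j E |R_j|^{1/2}‖₂`. The gap operator `|Σ - λ_j|` has square root
`|R_j|^{-1/2}`, and `|R_j|^{1/2} |R_j|^{-1/2} = 1 - P_j`. Writing `x = ⟨u_j, x⟩ u_j + |R_j|^{1/2} y`
with `y = |R_j|^{-1/2} x` splits the quadratic form of `E` into a diagonal, a cross and a remaining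
block. The first and the last differ from `a |x|²` by at most `2 δ'_j |y|²`, and Young's inequality
bounds the cross term by `|y|² / 2 + 2 h² |x|²`. As `δ'_j ≤ 1/4`, this gives
`± (E - a) ≤ |Σ - λ_j| + 2 h²` as quadratic forms. On the span of the `u_k` with `k ≥ j`, where
`Σ = λ_j - |Σ - λ_j|`, the gap operator cancels and `Σ + E ≤ λ_j + a + 2 h²`, so the
Courant–Fischer principle bounds `λ̂_j` from above; the span of the `u_k` with `k ≤ j` gives the
lower bound. Hence `|λ̂_j - λ_j - a| ≤ 2 h²`, which is stronger than the bound with denominator.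
-/

/-- The vectors `u k` form an orthonormal basis of `ℝ^d`, expressed through the dot product because
the coordinate space `Fin d → ℝ` carries the sup norm. -/
def IsOrthonormalFrame {d : ℕ} (u : Fin d → Fin d → ℝ) : Prop :=
  ∀ k l, u k ⬝ᵥ u l = if k = l then (1 : ℝ) else 0

section DotProduct

variable {n : Type*} [Fintype n]

lemma abs_dotProduct_le_half_add (v w : n → ℝ) : |v ⬝ᵥ w| ≤ (v ⬝ᵥ v + w ⬝ᵥ w) / 2 := by
  have h_sub : 0 ≤ (v - w) ⬝ᵥ (v - w) := dotProduct_self_star_nonneg (v - w)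
  have h_add : 0 ≤ (v + w) ⬝ᵥ (v + w) := dotProduct_self_star_nonneg (v + w)
  simp only [sub_dotProduct, dotProduct_sub, add_dotProduct, dotProduct_add,
    dotProduct_comm w v] at h_sub h_add
  exact abs_le.mpr ⟨by linarith, by linarith⟩

lemma exists_ne_zero_forall_ne_dotProduct_eq_zero {R : Type*} [CommRing R] [IsDomain R]
    (v : n → n → R) (j : n) : ∃ x : n → R, x ≠ 0 ∧ ∀ k, k ≠ j → v k ⬝ᵥ x = 0 := by
  classical
  have hdet : (updateRow (of v) j 0).det = 0 :=
    det_eq_zero_of_row_eq_zero j fun i => by rw [updateRow_self, Pi.zero_apply]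
  obtain ⟨x, hx, hvx⟩ := exists_mulVec_eq_zero_iff.mpr hdet
  refine ⟨x, hx, fun k hk => ?_⟩
  simpa only [mulVec, updateRow_ne hk, of_apply, Pi.zero_apply] using congrFun hvx k

lemma dotProduct_mulVec_comm_of_isSymm {R : Type*} [CommSemiring R] {A : Matrix n n R}
    (hA : A.IsSymm) (v w : n → R) : v ⬝ᵥ A *ᵥ w = w ⬝ᵥ A *ᵥ v := by
  rw [dotProduct_mulVec, ← mulVec_transpose, hA.eq, dotProduct_comm]

end DotProduct

section Norms

variable {d : ℕ}

lemma abs_dotProduct_mulVec_le_opNorm_mul (A : Matrix (Fin d) (Fin d) ℝ) (x : Fin d → ℝ) :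
    |x ⬝ᵥ A *ᵥ x| ≤ opNorm A * (x ⬝ᵥ x) := by
  have h_inner (v w : Fin d → ℝ) : inner ℝ (WithLp.toLp 2 v) (WithLp.toLp 2 w) = w ⬝ᵥ v := by
    rw [EuclideanSpace.inner_toLp_toLp, star_trivial]
  calc |x ⬝ᵥ A *ᵥ x|
      = |inner ℝ (toEuclideanCLM (𝕜 := ℝ) A (WithLp.toLp 2 x)) (WithLp.toLp 2 x)| := by
        rw [toEuclideanCLM_toLp, h_inner]
    _ ≤ ‖toEuclideanCLM (𝕜 := ℝ) A (WithLp.toLp 2 x)‖ * ‖WithLp.toLp 2 x‖ :=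
        abs_real_inner_le_norm _ _
    _ ≤ opNorm A * ‖WithLp.toLp 2 x‖ * ‖WithLp.toLp 2 x‖ := by
        gcongr
        exact (toEuclideanCLM (𝕜 := ℝ) A).le_opNorm _
    _ = opNorm A * (x ⬝ᵥ x) := by
        rw [mul_assoc, ← real_inner_self_eq_norm_mul_norm, h_inner]

lemma hsNorm_nonneg (A : Matrix (Fin d) (Fin d) ℝ) : 0 ≤ hsNorm A :=
  Real.sqrt_nonneg _

lemma hsNorm_transpose (A : Matrix (Fin d) (Fin d) ℝ) : hsNorm Aᵀ = hsNorm A := by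
  rw [hsNorm, hsNorm, transpose_transpose, trace_mul_comm]

lemma hsNorm_vecMulVec_sq (v w : Fin d → ℝ) :
    hsNorm (vecMulVec v w) ^ 2 = (v ⬝ᵥ v) * (w ⬝ᵥ w) := by
  have h_nonneg : 0 ≤ (v ⬝ᵥ v) * (w ⬝ᵥ w) :=
    mul_nonneg (dotProduct_self_star_nonneg v) (dotProduct_self_star_nonneg w)
  rw [hsNorm, transpose_vecMulVec, vecMulVec_mul_vecMulVec, trace_vecMulVec, dotProduct_smul,
    smul_eq_mul, Real.sq_sqrt h_nonneg]

end Norms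

section Proj

variable {d : ℕ}

lemma proj_isSymm (v : Fin d → ℝ) : (proj v).IsSymm :=
  transpose_vecMulVec v v

lemma proj_mulVec (v x : Fin d → ℝ) : proj v *ᵥ x = (v ⬝ᵥ x) • v := by
  rw [proj, vecMulVec_mulVec, op_smul_eq_smul]

lemma proj_mul_mul_proj (v : Fin d → ℝ) (A : Matrix (Fin d) (Fin d) ℝ) :
    proj v * A * proj v = vecMulVec ((v ⬝ᵥ A *ᵥ v) • v) v := by
  rw [mul_assoc, proj, mul_vecMulVec, mul_vecMulVec, ← proj, proj_mulVec]

lemma trace_proj_mul_mul_proj {v : Fin d → ℝ} (hv : v ⬝ᵥ v = 1)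
    (A : Matrix (Fin d) (Fin d) ℝ) : trace (proj v * A * proj v) = v ⬝ᵥ A *ᵥ v := by
  rw [proj_mul_mul_proj, trace_vecMulVec, smul_dotProduct, hv, smul_eq_mul, mul_one]

lemma hsNorm_proj_mul_mul_proj {v : Fin d → ℝ} (hv : v ⬝ᵥ v = 1)
    (A : Matrix (Fin d) (Fin d) ℝ) : hsNorm (proj v * A * proj v) = |v ⬝ᵥ A *ᵥ v| := by
  rw [← sq_eq_sq₀ (hsNorm_nonneg _) (abs_nonneg _), proj_mul_mul_proj, hsNorm_vecMulVec_sq,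
    smul_dotProduct, dotProduct_smul, hv, sq_abs, smul_eq_mul, smul_eq_mul]
  ring

lemma hsNorm_proj_mul_sq {v : Fin d → ℝ} (hv : v ⬝ᵥ v = 1) (A : Matrix (Fin d) (Fin d) ℝ) :
    hsNorm (proj v * A) ^ 2 = (v ᵥ* A) ⬝ᵥ (v ᵥ* A) := by
  rw [proj, vecMulVec_mul, hsNorm_vecMulVec_sq, hv, one_mul]

lemma sum_smul_proj_isSymm {ι : Type*} (s : Finset ι) (c : ι → ℝ) (u : ι → Fin d → ℝ) :
    (∑ k ∈ s, c k • proj (u k)).IsSymm := by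
  rw [IsSymm, transpose_sum]
  exact sum_congr rfl fun k _ => ((proj_isSymm (u k)).smul (c k)).eq

lemma dotProduct_sum_smul_proj_mulVec {ι : Type*} (s : Finset ι) (c : ι → ℝ)
    (u : ι → Fin d → ℝ) (x : Fin d → ℝ) :
    x ⬝ᵥ (∑ k ∈ s, c k • proj (u k)) *ᵥ x = ∑ k ∈ s, c k * (u k ⬝ᵥ x) ^ 2 := by
  rw [sum_mulVec, dotProduct_sum]
  refine sum_congr rfl fun k _ => ?_
  rw [smul_mulVec, proj_mulVec, dotProduct_smul, dotProduct_smul, dotProduct_comm x,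
    smul_eq_mul, smul_eq_mul, pow_two]

end Proj

namespace IsOrthonormalFrame

variable {d : ℕ} {u : Fin d → Fin d → ℝ}

lemma dotProduct_self (hu : IsOrthonormalFrame u) (k : Fin d) : u k ⬝ᵥ u k = 1 := by
  rw [hu, if_pos rfl]

lemma proj_mul_proj (hu : IsOrthonormalFrame u) (k l : Fin d) :
    proj (u k) * proj (u l) = if k = l then proj (u k) else 0 := by
  rw [proj, proj, vecMulVec_mul_vecMulVec, hu]
  split_ifs with hkl
  · rw [hkl, one_smul]
  · rw [zero_smul, vecMulVec_zero]

lemma sum_smul_proj_mul_sum_smul_proj (hu : IsOrthonormalFrame u) (s : Finset (Fin d))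
    (a b : Fin d → ℝ) :
    (∑ k ∈ s, a k • proj (u k)) * ∑ k ∈ s, b k • proj (u k) =
      ∑ k ∈ s, (a k * b k) • proj (u k) := by
  rw [sum_mul_sum]
  refine sum_congr rfl fun k hk => ?_
  simp only [smul_mul_smul_comm, hu.proj_mul_proj, smul_ite, smul_zero, sum_ite_eq, if_pos hk]

lemma sum_proj (hu : IsOrthonormalFrame u) : ∑ k, proj (u k) = 1 := by
  have h_rows : of u * (of u)ᵀ = 1 := by
    ext k l
    rw [mul_apply_eq_vecMul, one_apply]
    exact hu k l
  rw [← mul_eq_one_comm.mp h_rows]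
  ext i l
  simp only [Matrix.sum_apply, proj, vecMulVec_apply, mul_apply, transpose_apply, of_apply]

lemma sum_dotProduct_sq (hu : IsOrthonormalFrame u) (x : Fin d → ℝ) :
    ∑ k, (u k ⬝ᵥ x) ^ 2 = x ⬝ᵥ x := by
  have h := dotProduct_sum_smul_proj_mulVec univ 1 u x
  simpa only [Pi.one_apply, one_smul, one_mul, hu.sum_proj, one_mulVec] using h.symm

lemma sq_dotProduct_le (hu : IsOrthonormalFrame u) (k : Fin d) (x : Fin d → ℝ) :
    (u k ⬝ᵥ x) ^ 2 ≤ x ⬝ᵥ x := by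
  rw [← hu.sum_dotProduct_sq x]
  exact single_le_sum (f := fun l => (u l ⬝ᵥ x) ^ 2) (fun l _ => sq_nonneg _) (mem_univ k)

lemma dotProduct_sum_smul_proj_mulVec_sub (hu : IsOrthonormalFrame u) (μ : Fin d → ℝ) (c : ℝ)
    (x : Fin d → ℝ) :
    x ⬝ᵥ (∑ k, μ k • proj (u k)) *ᵥ x - c * (x ⬝ᵥ x) = ∑ k, (μ k - c) * (u k ⬝ᵥ x) ^ 2 := by
  simp only [dotProduct_sum_smul_proj_mulVec, ← hu.sum_dotProduct_sq x, mul_sum, sub_mul,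
    sum_sub_distrib]

variable {μ : Fin d → ℝ} (w : Fin d → Fin d → ℝ) {j : Fin d} {c : ℝ}

-- Courant–Fischer: the `d - 1` conditions `w k ⬝ᵥ x = 0` for `k < j` and `u k ⬝ᵥ x = 0` for
-- `k > j` have a nonzero common solution.
theorem eigenvalue_le_of_forall_orthogonal (hu : IsOrthonormalFrame u) (hμ : Antitone μ)
    (h : ∀ x, (∀ k < j, w k ⬝ᵥ x = 0) →
      x ⬝ᵥ (∑ k, μ k • proj (u k)) *ᵥ x ≤ c * (x ⬝ᵥ x)) : μ j ≤ c := by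
  obtain ⟨x, hx, h_orth⟩ :=
    exists_ne_zero_forall_ne_dotProduct_eq_zero (fun k => if k < j then w k else u k) j
  have hw : ∀ k < j, w k ⬝ᵥ x = 0 := fun k hk => by simpa only [if_pos hk] using h_orth k hk.ne
  have hux : ∀ k > j, u k ⬝ᵥ x = 0 := fun k hk => by
    simpa only [if_neg hk.not_gt] using h_orth k hk.ne'
  have h_nonneg : 0 ≤ ∑ k, (μ k - μ j) * (u k ⬝ᵥ x) ^ 2 := by
    refine sum_nonneg fun k _ => ?_
    rcases le_or_gt k j with hk | hk
    · exact mul_nonneg (sub_nonneg.mpr (hμ hk)) (sq_nonneg _)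
    · rw [hux k hk, zero_pow two_ne_zero, mul_zero]
  rw [← hu.dotProduct_sum_smul_proj_mulVec_sub, sub_nonneg] at h_nonneg
  exact le_of_mul_le_mul_right (h_nonneg.trans (h x hw)) (dotProduct_self_star_pos_iff.mpr hx)

theorem le_eigenvalue_of_forall_orthogonal (hu : IsOrthonormalFrame u) (hμ : Antitone μ)
    (h : ∀ x, (∀ k > j, w k ⬝ᵥ x = 0) →
      c * (x ⬝ᵥ x) ≤ x ⬝ᵥ (∑ k, μ k • proj (u k)) *ᵥ x) : c ≤ μ j := by
  obtain ⟨x, hx, h_orth⟩ :=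
    exists_ne_zero_forall_ne_dotProduct_eq_zero (fun k => if k < j then u k else w k) j
  have hux : ∀ k < j, u k ⬝ᵥ x = 0 := fun k hk => by simpa only [if_pos hk] using h_orth k hk.ne
  have hw : ∀ k > j, w k ⬝ᵥ x = 0 := fun k hk => by
    simpa only [if_neg hk.not_gt] using h_orth k hk.ne'
  have h_nonpos : ∑ k, (μ k - μ j) * (u k ⬝ᵥ x) ^ 2 ≤ 0 := by
    refine sum_nonpos fun k _ => ?_
    rcases lt_or_ge k j with hk | hk
    · rw [hux k hk, zero_pow two_ne_zero, mul_zero]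
    · exact mul_nonpos_of_nonpos_of_nonneg (sub_nonpos.mpr (hμ hk)) (sq_nonneg _)
  rw [← hu.dotProduct_sum_smul_proj_mulVec_sub, sub_nonpos] at h_nonpos
  exact le_of_mul_le_mul_right ((h x hw).trans h_nonpos) (dotProduct_self_star_pos_iff.mpr hx)

end IsOrthonormalFrame

section Resolvent

variable {d : ℕ} {lam : Fin d → ℝ} {u : Fin d → Fin d → ℝ} {j : Fin d}

lemma sqrtAbsRes_isSymm (lam : Fin d → ℝ) (u : Fin d → Fin d → ℝ) (j : Fin d) :
    (sqrtAbsRes lam u j).IsSymm :=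
  sum_smul_proj_isSymm _ _ _

lemma sqrtAbsRes_mul_invSqrtAbsRes (hu : IsOrthonormalFrame u)
    (hne : ∀ k, k ≠ j → lam k ≠ lam j) :
    sqrtAbsRes lam u j * invSqrtAbsRes lam u j = 1 - proj (u j) := by
  have h_cancel : ∀ k ∈ univ.filter (· ≠ j),
      ((√|lam k - lam j|)⁻¹ * √|lam k - lam j|) • proj (u k) = proj (u k) := fun k hk => by
    have h_pos : 0 < |lam k - lam j| := abs_sub_pos.mpr (hne k (mem_filter.mp hk).2)
    rw [inv_mul_cancel₀ (Real.sqrt_pos.mpr h_pos).ne', one_smul]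
  rw [sqrtAbsRes, invSqrtAbsRes, hu.sum_smul_proj_mul_sum_smul_proj, sum_congr rfl h_cancel,
    ← hu.sum_proj, filter_ne', ← sum_erase_eq_sub (mem_univ j)]

lemma invSqrtAbsRes_mulVec_dotProduct_self (hu : IsOrthonormalFrame u) (x : Fin d → ℝ) :
    (invSqrtAbsRes lam u j *ᵥ x) ⬝ᵥ (invSqrtAbsRes lam u j *ᵥ x) =
      ∑ k, |lam k - lam j| * (u k ⬝ᵥ x) ^ 2 := by
  have h_symm : (invSqrtAbsRes lam u j).IsSymm := sum_smul_proj_isSymm _ _ _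
  rw [dotProduct_mulVec_comm_of_isSymm h_symm, mulVec_mulVec, invSqrtAbsRes,
    hu.sum_smul_proj_mul_sum_smul_proj, dotProduct_sum_smul_proj_mulVec]
  simp only [Real.mul_self_sqrt (abs_nonneg _)]
  refine sum_filter_of_ne fun k _ hk => ?_
  rintro rfl
  rw [sub_self, abs_zero, zero_mul] at hk
  exact hk rfl

lemma dotProduct_mulVec_eq_sub_of_forall_lt (hu : IsOrthonormalFrame u) (hlam : Antitone lam)
    {x : Fin d → ℝ} (hx : ∀ k < j, u k ⬝ᵥ x = 0) :
    x ⬝ᵥ (∑ k, lam k • proj (u k)) *ᵥ x = lam j * (x ⬝ᵥ x) -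
      (invSqrtAbsRes lam u j *ᵥ x) ⬝ᵥ (invSqrtAbsRes lam u j *ᵥ x) := by
  rw [sub_eq_add_neg, ← sub_eq_iff_eq_add', hu.dotProduct_sum_smul_proj_mulVec_sub,
    invSqrtAbsRes_mulVec_dotProduct_self hu, ← sum_neg_distrib]
  refine sum_congr rfl fun k _ => ?_
  rcases lt_or_ge k j with hk | hk
  · rw [hx k hk, zero_pow two_ne_zero, mul_zero, mul_zero, neg_zero]
  · rw [abs_of_nonpos (sub_nonpos.mpr (hlam hk)), neg_mul, neg_neg]

lemma dotProduct_mulVec_eq_add_of_forall_gt (hu : IsOrthonormalFrame u) (hlam : Antitone lam)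
    {x : Fin d → ℝ} (hx : ∀ k > j, u k ⬝ᵥ x = 0) :
    x ⬝ᵥ (∑ k, lam k • proj (u k)) *ᵥ x = lam j * (x ⬝ᵥ x) +
      (invSqrtAbsRes lam u j *ᵥ x) ⬝ᵥ (invSqrtAbsRes lam u j *ᵥ x) := by
  rw [← sub_eq_iff_eq_add', hu.dotProduct_sum_smul_proj_mulVec_sub,
    invSqrtAbsRes_mulVec_dotProduct_self hu]
  refine sum_congr rfl fun k _ => ?_
  rcases le_or_gt k j with hk | hk
  · rw [abs_of_nonneg (sub_nonneg.mpr (hlam hk))]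
  · rw [hx k hk, zero_pow two_ne_zero, mul_zero, mul_zero]

lemma mul_dotProduct_self_sub_sq_le (hu : IsOrthonormalFrame u) {g : ℝ}
    (hgap : ∀ k, k ≠ j → g ≤ |lam k - lam j|) (x : Fin d → ℝ) :
    g * (x ⬝ᵥ x - (u j ⬝ᵥ x) ^ 2) ≤
      (invSqrtAbsRes lam u j *ᵥ x) ⬝ᵥ (invSqrtAbsRes lam u j *ᵥ x) := by
  rw [invSqrtAbsRes_mulVec_dotProduct_self hu, ← hu.sum_dotProduct_sq x,
    ← sum_erase_eq_sub (mem_univ j), mul_sum]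
  calc ∑ k ∈ univ.erase j, g * (u k ⬝ᵥ x) ^ 2
      ≤ ∑ k ∈ univ.erase j, |lam k - lam j| * (u k ⬝ᵥ x) ^ 2 := by
        gcongr with k hk
        exact hgap k (ne_of_mem_erase hk)
    _ ≤ ∑ k, |lam k - lam j| * (u k ⬝ᵥ x) ^ 2 :=
        sum_le_sum_of_subset_of_nonneg (erase_subset _ _) fun k _ _ => by positivity

lemma abs_mul_dotProduct_self_sub_sq_le (hu : IsOrthonormalFrame u) {a g δ : ℝ} (hδ : 0 ≤ δ)
    (ha : |a| ≤ g * δ) (hgap : ∀ k, k ≠ j → g ≤ |lam k - lam j|) (x : Fin d → ℝ) :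
    |a * (x ⬝ᵥ x - (u j ⬝ᵥ x) ^ 2)| ≤
      δ * ((invSqrtAbsRes lam u j *ᵥ x) ⬝ᵥ (invSqrtAbsRes lam u j *ᵥ x)) := by
  have h_bessel : 0 ≤ x ⬝ᵥ x - (u j ⬝ᵥ x) ^ 2 := sub_nonneg.mpr (hu.sq_dotProduct_le j x)
  calc |a * (x ⬝ᵥ x - (u j ⬝ᵥ x) ^ 2)|
      = |a| * (x ⬝ᵥ x - (u j ⬝ᵥ x) ^ 2) := by rw [abs_mul, abs_of_nonneg h_bessel]
    _ ≤ g * δ * (x ⬝ᵥ x - (u j ⬝ᵥ x) ^ 2) := mul_le_mul_of_nonneg_right ha h_bessel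
    _ = δ * (g * (x ⬝ᵥ x - (u j ⬝ᵥ x) ^ 2)) := by ring
    _ ≤ δ * ((invSqrtAbsRes lam u j *ᵥ x) ⬝ᵥ (invSqrtAbsRes lam u j *ᵥ x)) :=
        mul_le_mul_of_nonneg_left (mul_dotProduct_self_sub_sq_le hu hgap x) hδ

lemma dotProduct_mulVec_eq_blocks (hu : IsOrthonormalFrame u)
    (hne : ∀ k, k ≠ j → lam k ≠ lam j) {E : Matrix (Fin d) (Fin d) ℝ} (hE : E.IsSymm)
    {x y : Fin d → ℝ} (hy : y = invSqrtAbsRes lam u j *ᵥ x) :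
    x ⬝ᵥ E *ᵥ x = (u j ⬝ᵥ E *ᵥ u j) * (u j ⬝ᵥ x) ^ 2 +
      ((2 * (u j ⬝ᵥ x)) • (u j ᵥ* (E * sqrtAbsRes lam u j))) ⬝ᵥ y +
      y ⬝ᵥ (sqrtAbsRes lam u j * E * sqrtAbsRes lam u j) *ᵥ y := by
  set S := sqrtAbsRes lam u j
  have hx : x = (u j ⬝ᵥ x) • u j + S *ᵥ y := by
    rw [hy, mulVec_mulVec, sqrtAbsRes_mul_invSqrtAbsRes hu hne, sub_mulVec, one_mulVec,
      proj_mulVec, add_sub_cancel]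
  have h_cross : (u j ᵥ* (E * S)) ⬝ᵥ y = u j ⬝ᵥ E *ᵥ (S *ᵥ y) := by
    rw [← dotProduct_mulVec, mulVec_mulVec]
  have h_block : y ⬝ᵥ (S * E * S) *ᵥ y = (S *ᵥ y) ⬝ᵥ E *ᵥ (S *ᵥ y) := by
    rw [← mulVec_mulVec, ← mulVec_mulVec,
      dotProduct_mulVec_comm_of_isSymm (sqrtAbsRes_isSymm lam u j), dotProduct_comm]
  rw [smul_dotProduct, h_cross, h_block]
  generalize u j ⬝ᵥ x = p at hx
  rw [hx]
  simp only [mulVec_add, mulVec_smul, dotProduct_add, add_dotProduct, dotProduct_smul,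
    smul_dotProduct, smul_eq_mul, dotProduct_mulVec_comm_of_isSymm hE (S *ᵥ y) (u j)]
  ring

end Resolvent

section Perturbation

variable {d : ℕ} {lam : Fin d → ℝ} {u : Fin d → Fin d → ℝ} {j : Fin d} {g : ℝ}
  {E : Matrix (Fin d) (Fin d) ℝ}

lemma opNorm_le_delta' (lam : Fin d → ℝ) (u : Fin d → Fin d → ℝ) (j : Fin d) (g : ℝ)
    (E : Matrix (Fin d) (Fin d) ℝ) :
    opNorm (sqrtAbsRes lam u j * E * sqrtAbsRes lam u j) ≤ delta' lam u j g E :=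
  le_max_left _ _

lemma delta'_nonneg (lam : Fin d → ℝ) (u : Fin d → Fin d → ℝ) (j : Fin d) (g : ℝ)
    (E : Matrix (Fin d) (Fin d) ℝ) : 0 ≤ delta' lam u j g E :=
  (norm_nonneg _).trans (opNorm_le_delta' lam u j g E)

lemma abs_dotProduct_mulVec_le_mul_delta' (hu : IsOrthonormalFrame u) (hg : 0 < g) :
    |u j ⬝ᵥ E *ᵥ u j| ≤ g * delta' lam u j g E := by
  rw [← hsNorm_proj_mul_mul_proj (hu.dotProduct_self j), ← inv_mul_le_iff₀ hg]
  exact (le_max_right _ _).trans (le_max_right _ _)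

lemma hsNorm_proj_mul_mul_sqrtAbsRes_sq_le (hE : E.IsSymm) (hg : 0 < g) :
    hsNorm (proj (u j) * E * sqrtAbsRes lam u j) ^ 2 ≤ g * delta' lam u j g E ^ 2 := by
  have h_transpose :
      (sqrtAbsRes lam u j * E * proj (u j))ᵀ = proj (u j) * E * sqrtAbsRes lam u j := by
    rw [transpose_mul, transpose_mul, (proj_isSymm _).eq, hE.eq, (sqrtAbsRes_isSymm _ _ _).eq,
      mul_assoc]
  have h_delta : (√g)⁻¹ * hsNorm (sqrtAbsRes lam u j * E * proj (u j)) ≤ delta' lam u j g E :=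
    (le_max_left _ _).trans (le_max_right _ _)
  rw [inv_mul_le_iff₀ (Real.sqrt_pos.mpr hg), ← hsNorm_transpose, h_transpose] at h_delta
  calc hsNorm (proj (u j) * E * sqrtAbsRes lam u j) ^ 2
      ≤ (√g * delta' lam u j g E) ^ 2 := pow_le_pow_left₀ (hsNorm_nonneg _) h_delta 2
    _ = g * delta' lam u j g E ^ 2 := by rw [mul_pow, Real.sq_sqrt hg.le]

theorem abs_dotProduct_mulVec_sub_le (hu : IsOrthonormalFrame u) (hE : E.IsSymm) (hg : 0 < g)
    (hgap : ∀ k, k ≠ j → g ≤ |lam k - lam j|) (x : Fin d → ℝ) :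
    |x ⬝ᵥ E *ᵥ x - (u j ⬝ᵥ E *ᵥ u j) * (x ⬝ᵥ x)| ≤
      (2 * delta' lam u j g E + 1 / 2) *
          ((invSqrtAbsRes lam u j *ᵥ x) ⬝ᵥ (invSqrtAbsRes lam u j *ᵥ x)) +
        2 * hsNorm (proj (u j) * E * sqrtAbsRes lam u j) ^ 2 * (x ⬝ᵥ x) := by
  set S := sqrtAbsRes lam u j
  set δ := delta' lam u j g E
  set y := invSqrtAbsRes lam u j *ᵥ x with hy
  set a := u j ⬝ᵥ E *ᵥ u j
  set p := u j ⬝ᵥ x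
  set b := u j ᵥ* (E * S) with hb
  have hne : ∀ k, k ≠ j → lam k ≠ lam j := fun k hk =>
    sub_ne_zero.mp (abs_pos.mp (hg.trans_le (hgap k hk)))
  have h_diag : |a * (x ⬝ᵥ x - p ^ 2)| ≤ δ * (y ⬝ᵥ y) :=
    abs_mul_dotProduct_self_sub_sq_le hu (delta'_nonneg lam u j g E)
      (abs_dotProduct_mulVec_le_mul_delta' hu hg) hgap x
  have h_block : |y ⬝ᵥ (S * E * S) *ᵥ y| ≤ δ * (y ⬝ᵥ y) :=
    (abs_dotProduct_mulVec_le_opNorm_mul _ y).trans <| mul_le_mul_of_nonneg_right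
      (opNorm_le_delta' lam u j g E) (dotProduct_self_star_nonneg y)
  have h_cross : |((2 * p) • b) ⬝ᵥ y| ≤ 2 * (b ⬝ᵥ b) * (x ⬝ᵥ x) + 1 / 2 * (y ⬝ᵥ y) := by
    calc |((2 * p) • b) ⬝ᵥ y|
        ≤ (((2 * p) • b) ⬝ᵥ ((2 * p) • b) + y ⬝ᵥ y) / 2 := abs_dotProduct_le_half_add _ _
      _ = 2 * (b ⬝ᵥ b) * p ^ 2 + 1 / 2 * (y ⬝ᵥ y) := by
          rw [smul_dotProduct, dotProduct_smul, smul_eq_mul, smul_eq_mul]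
          ring
      _ ≤ 2 * (b ⬝ᵥ b) * (x ⬝ᵥ x) + 1 / 2 * (y ⬝ᵥ y) := by
          have hbb : 0 ≤ b ⬝ᵥ b := dotProduct_self_star_nonneg b
          gcongr
          exact hu.sq_dotProduct_le j x
  rw [mul_assoc (proj (u j)), hsNorm_proj_mul_sq (hu.dotProduct_self j), ← hb,
    dotProduct_mulVec_eq_blocks hu hne hE hy]
  rw [abs_le] at h_diag h_block h_cross ⊢
  constructor <;> linarith

theorem abs_eigenvalue_sub_le_s12 (hu : IsOrthonormalFrame u) (hlam : Antitone lam)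
    (hg : 0 < g) (hgap : ∀ k, k ≠ j → g ≤ |lam k - lam j|)
    {lamh : Fin d → ℝ} {uh : Fin d → Fin d → ℝ} (huh : IsOrthonormalFrame uh)
    (hlamh : Antitone lamh)
    (hdecomp : (∑ k, lam k • proj (u k)) + E = ∑ k, lamh k • proj (uh k))
    (hdelta : delta' lam u j g E ≤ 1 / 4) :
    |lamh j - lam j - u j ⬝ᵥ E *ᵥ u j| ≤
      2 * hsNorm (proj (u j) * E * sqrtAbsRes lam u j) ^ 2 := by
  have hE : E.IsSymm := by
    rw [eq_sub_of_add_eq' hdecomp]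
    exact (sum_smul_proj_isSymm _ _ _).sub (sum_smul_proj_isSymm _ _ _)
  have h_form (x : Fin d → ℝ) :
      |x ⬝ᵥ E *ᵥ x - (u j ⬝ᵥ E *ᵥ u j) * (x ⬝ᵥ x)| ≤
        (invSqrtAbsRes lam u j *ᵥ x) ⬝ᵥ (invSqrtAbsRes lam u j *ᵥ x) +
          2 * hsNorm (proj (u j) * E * sqrtAbsRes lam u j) ^ 2 * (x ⬝ᵥ x) := by
    refine (abs_dotProduct_mulVec_sub_le hu hE hg hgap x).trans ?_
    gcongr
    exact mul_le_of_le_one_left (dotProduct_self_star_nonneg _) (by linarith)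
  rw [abs_le']
  constructor
  · suffices lamh j ≤ lam j + u j ⬝ᵥ E *ᵥ u j +
        2 * hsNorm (proj (u j) * E * sqrtAbsRes lam u j) ^ 2 by linarith
    refine huh.eigenvalue_le_of_forall_orthogonal u hlamh fun x hx => ?_
    rw [← hdecomp, add_mulVec, dotProduct_add, dotProduct_mulVec_eq_sub_of_forall_lt hu hlam hx]
    linarith [(abs_le.mp (h_form x)).2]
  · suffices lam j + u j ⬝ᵥ E *ᵥ u j -
        2 * hsNorm (proj (u j) * E * sqrtAbsRes lam u j) ^ 2 ≤ lamh j by linarith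
    refine huh.le_eigenvalue_of_forall_orthogonal u hlamh fun x hx => ?_
    rw [← hdecomp, add_mulVec, dotProduct_add, dotProduct_mulVec_eq_add_of_forall_gt hu hlam hx]
    linarith [(abs_le.mp (h_form x)).1]

end Perturbation

theorem stmt12 {d : ℕ} (lam : Fin d → ℝ) (u : Fin d → Fin d → ℝ)
    (hON : ∀ k l, u k ⬝ᵥ u l = if k = l then (1 : ℝ) else 0)
    (hlam : Antitone lam)
    (E : Matrix (Fin d) (Fin d) ℝ) (hE : E.IsSymm)
    (j : Fin d) (gj : ℝ) (hgj_pos : 0 < gj)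
    (hgj : IsLeast {x : ℝ | ∃ k, k ≠ j ∧ x = |lam k - lam j|} gj)
    (lamh : Fin d → ℝ) (uh : Fin d → Fin d → ℝ)
    (hONh : ∀ k l, uh k ⬝ᵥ uh l = if k = l then (1 : ℝ) else 0)
    (hlamh : Antitone lamh)
    (hdecomp : (∑ k, lam k • proj (u k)) + E = ∑ k, lamh k • proj (uh k))
    (hdelta : delta' lam u j gj E < 1 / 4) :
    |lamh j - lam j - Matrix.trace (proj (u j) * E * proj (u j))| ≤
        8 * hsNorm (proj (u j) * E * sqrtAbsRes lam u j) ^ 2 /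
          (1 - 4 * delta' lam u j gj E) ∧
      8 * hsNorm (proj (u j) * E * sqrtAbsRes lam u j) ^ 2 /
          (1 - 4 * delta' lam u j gj E) ≤
        gj * (4 * delta' lam u j gj E) ^ 2 / (1 - 4 * delta' lam u j gj E) := by
  set δ := delta' lam u j gj E
  set h := hsNorm (proj (u j) * E * sqrtAbsRes lam u j)
  have hδ : 0 ≤ δ := delta'_nonneg lam u j gj E
  have h_den : 0 < 1 - 4 * δ := by linarith
  have h_shift : |lamh j - lam j - u j ⬝ᵥ E *ᵥ u j| ≤ 2 * h ^ 2 :=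
    abs_eigenvalue_sub_le_s12 hON hlam hgj_pos (fun k hk => hgj.2 ⟨k, hk, rfl⟩) hONh hlamh hdecomp
      hdelta.le
  have h_sq : h ^ 2 ≤ gj * δ ^ 2 := hsNorm_proj_mul_mul_sqrtAbsRes_sq_le hE hgj_pos
  have hjj : u j ⬝ᵥ u j = 1 := IsOrthonormalFrame.dotProduct_self hON j
  rw [trace_proj_mul_mul_proj hjj]
  constructor
  · calc |lamh j - lam j - u j ⬝ᵥ E *ᵥ u j|
        ≤ 2 * h ^ 2 := h_shift
      _ ≤ 8 * h ^ 2 := by linarith [sq_nonneg h]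
      _ ≤ 8 * h ^ 2 / (1 - 4 * δ) := le_div_self (by positivity) h_den (by linarith)
  · refine div_le_div_of_nonneg_right ?_ h_den.le
    calc 8 * h ^ 2 ≤ 16 * (gj * δ ^ 2) := by linarith [sq_nonneg h]
      _ = gj * (4 * δ) ^ 2 := by ring
end
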